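/- Let B ⊆ {0,…,s−1} be nonempty with |B| = v and let t > v be an integer. Suppose λ_0, …, λ_{ns−1} are pairwise distinct and satisfy the local constraints. Then there exists an ℓt × ℓt matrix M over F_q such that: (i) M · A_{0,B}^(t) equals the block matrix with A_{0,B}^(v) on top and the ℓ(t−v) × ℓv zero matrix below; and (ii) for every a with 0 < a < n/s and every b ∈ {0,…,s−1}, M · A_{a,b}^(t) equals the block matrix with A_{a,b}^(v) on top and a matrix Â below, where Â = A_{a,b}^(t−v) · Q for some invertible ℓ × ℓ matrix Q over F_q (i.e., Â is column equivalent to A_{a,b}^(t−v)). -/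

import Mathlib

open Matrix

/-- The `u`-th digit of `i` in base `s`. -/
def digit (s i u : ℕ) : ℕ := i / s ^ u % s

open scoped Classical in
/-- The `z`-th entry of the `(i,j)` block (a length-`t` column vector, `0 ≤ z < t`) of the
block matrix `A_{a,b}^{(t)}`; the group size is `g` (`g = s` for the first construction and
`g = s + 1` for the second), so the relevant `λ`-index is `a·s·g + b·s + j_a`. -/
noncomputable def Aent {F : Type*} [Field F] (lam : ℕ → F) (s g a b i j z : ℕ) : F :=
  if i = j then lam (a * s * g + b * s + digit s j a) ^ z
  else if digit s i a = b ∧ digit s j a ≠ b ∧ (∀ u, u ≠ a → digit s i u = digit s j u) then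
    -(lam (a * s * g + b * s + digit s j a) ^ z)
  else 0

/-- `A_{a,b}^{(t)}` as an `ℓt × ℓ` matrix; row `ρ` encodes block row `ρ / t` and
inner row `ρ % t`. -/
noncomputable def Amat {F : Type*} [Field F] (lam : ℕ → F) (s g ℓ a b t : ℕ) :
    Matrix (Fin (ℓ * t)) (Fin ℓ) F :=
  Matrix.of fun ρ j => Aent lam s g a b ((ρ : ℕ) / t) (j : ℕ) ((ρ : ℕ) % t)

/-- The `m`-th smallest element of the finite set `B ⊆ ℕ` (junk value `0` if `m ≥ |B|`). -/
def enum (B : Finset ℕ) (m : ℕ) : ℕ := (B.sort (· ≤ ·)).getD m 0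

/-- `A_{a,B}^{(t)} = [A_{a,b₁}^{(t)} | ⋯ | A_{a,b_v}^{(t)}]` as an `ℓt × ℓ|B|` matrix:
row `ρ` encodes block row `ρ / t` and inner row `ρ % t`; column `κ` selects the
`κ / ℓ`-th member of `B` and inner column `κ % ℓ`. -/
noncomputable def AmatB {F : Type*} [Field F] (lam : ℕ → F) (s g ℓ a t : ℕ) (B : Finset ℕ) :
    Matrix (Fin (ℓ * t)) (Fin (ℓ * B.card)) F :=
  Matrix.of fun ρ κ =>
    Aent lam s g a (enum B ((κ : ℕ) / ℓ)) ((ρ : ℕ) / t) ((κ : ℕ) % ℓ) ((ρ : ℕ) % t)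

/-- The local (in-group) constraints: every square matrix `A_{a,B}` (for a group index
`a < groups` and a nonempty `B ⊆ {0, …, g-1}`) is invertible. -/
def LocalConstraints {F : Type*} [Field F] (lam : ℕ → F) (s g ℓ groups : ℕ) : Prop :=
  ∀ a < groups, ∀ B ⊆ Finset.range g, B.Nonempty → (AmatB lam s g ℓ a B.card B).det ≠ 0

open Polynomial Kronecker

/-!
Rows of length `ℓ * t` are vectors of polynomials of degree less than `t`, and multiplying them by
a block Vandermonde matrix evaluates them at the nodes `λ`. Up to reindexing, `A_{0,B}` has the
coefficient pattern `1 ⊗ W`, since it only couples the lowest digits of the indices, and `A_{a,b}`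
with `a > 0` has the pattern `D ⊗ 1`, since it leaves the lowest digit alone.

The local constraint says that evaluation at the nodes of group `0` is injective in degree less than
`v`. Hence there is an `s × s` polynomial matrix `G`, equal to `X ^ v • 1` up to terms of degree
less than `v`, all of whose rows vanish at these nodes. The top rows of `M` are the monomials of
degree less than `v` and the bottom rows are `X ^ z • (1 ⊗ G)` for `z < t - v`. The latter kill
`A_{0,B}` and, since `D ⊗ 1` and `1 ⊗ G` commute, send `A_{a,b}` to `A_{a,b}^{(t - v)} * Q` with `Q`
block diagonal with blocks `G(λ)`. Each block is invertible because `λ` is not a node of group `0`.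
-/

section NodeEvaluation

variable {R : Type*} [CommRing R] {ι κ σ : Type*}

/-- The block matrix whose `(i, c)` block is the column `W i c • (1, x c, …, x c ^ (t - 1))`. -/
def blockVandermonde (W : Matrix ι κ R) (x : κ → R) (t : ℕ) : Matrix (ι × Fin t) κ R :=
  of fun p c => W p.1 c * x c ^ (p.2 : ℕ)

/-- The matrix whose rows list the coefficients, up to degree `t - 1`, of the rows of `P`. -/
def coeffMatrix (t : ℕ) (P : Matrix σ ι R[X]) : Matrix σ (ι × Fin t) R :=
  of fun i p => (P i p.1).coeff p.2

/-- The matrix of the rows `X ^ z • H i` for `z < t`. -/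
noncomputable def shiftedRows (H : Matrix σ ι R[X]) (t : ℕ) :
    Matrix (σ × Fin t) ι R[X] :=
  of fun p => (X ^ (p.2 : ℕ) : R[X]) • H p.1

theorem degree_shiftedRows_lt {H : Matrix σ ι R[X]} {m k t : ℕ}
    (hH : ∀ i j, (H i j).natDegree ≤ m) (hmk : m + k ≤ t) (p : σ × Fin k) (j : ι) :
    (shiftedRows H k p j).degree < t := by
  have hdeg : (shiftedRows H k p j).natDegree ≤ p.2 + m :=
    natDegree_mul_le_of_le (natDegree_X_pow_le _) (hH p.1 j)
  refine degree_le_natDegree.trans_lt (Nat.cast_lt.2 ?_)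
  omega

variable [Fintype ι]

/-- Evaluation of a vector of polynomials at nodes: the `c`-th value is the combination of the
values at the node `x c` whose coefficients form the `c`-th column of `W`. -/
noncomputable def nodeEval (W : Matrix ι κ R) (x : κ → R) : (ι → R[X]) →ₗ[R] (κ → R) where
  toFun f c := ∑ i, W i c * (f i).eval (x c)
  map_add' f h := by
    ext c
    simp only [Pi.add_apply, eval_add, mul_add, Finset.sum_add_distrib]
  map_smul' r f := by
    ext c
    simp only [Pi.smul_apply, eval_smul, smul_eq_mul, RingHom.id_apply, Finset.mul_sum,
      mul_left_comm]

theorem nodeEval_apply (W : Matrix ι κ R) (x : κ → R) (f : ι → R[X]) (c : κ) :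
    nodeEval W x f c = ∑ i, W i c * (f i).eval (x c) :=
  rfl

theorem nodeEval_polynomial_smul (W : Matrix ι κ R) (x : κ → R) (p : R[X]) (f : ι → R[X])
    (c : κ) : nodeEval W x (p • f) c = p.eval (x c) * nodeEval W x f c := by
  simp only [nodeEval_apply, Pi.smul_apply, smul_eq_mul, eval_mul, Finset.mul_sum,
    mul_left_comm]

theorem nodeEval_one_row [DecidableEq ι] (W : Matrix ι κ R) (x : κ → R) (i : ι) (c : κ) :
    nodeEval W x ((1 : Matrix ι ι R[X]) i) c = W i c := by
  simp [nodeEval_apply, one_apply, apply_ite (eval (x c))]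

/-- A node evaluation is unisolvent in degree less than `v` if it determines every vector of
polynomials of degree less than `v`. -/
def IsUnisolvent (W : Matrix ι κ R) (x : κ → R) (v : ℕ) : Prop :=
  ∀ f : ι → R[X], (∀ i, (f i).degree < v) → nodeEval W x f = 0 → f = 0

theorem IsUnisolvent.exists_nodeEval_eq {F : Type*} [Field F] [Fintype κ] {W : Matrix ι κ F}
    {x : κ → F} {v : ℕ} (huni : IsUnisolvent W x v)
    (hcard : Fintype.card κ = Fintype.card ι * v) (y : κ → F) :
    ∃ f : ι → F[X], (∀ i, (f i).degree < v) ∧ nodeEval W x f = y := by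
  let T : (ι → degreeLT F v) →ₗ[F] (κ → F) := nodeEval W x ∘ₗ (degreeLT F v).subtype.compLeft ι
  have hT_inj : Function.Injective T := by
    refine (injective_iff_map_eq_zero T).2 fun f hf => funext fun i => Subtype.ext ?_
    exact congrFun (huni (fun i => f i) (fun i => mem_degreeLT.1 (f i).2) hf) i
  have : Module.Finite F (degreeLT F v) := Module.Finite.equiv (degreeLTEquiv F v).symm
  have hfinrank : Module.finrank F (ι → degreeLT F v) = Module.finrank F (κ → F) := by
    simp [Module.finrank_pi_fintype, (degreeLTEquiv F v).finrank_eq, hcard]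
  obtain ⟨f, hf⟩ := (LinearMap.injective_iff_surjective_of_finrank_eq_finrank hfinrank).1 hT_inj y
  exact ⟨fun i => f i, fun i => mem_degreeLT.1 (f i).2, hf⟩

theorem coeffMatrix_mul_blockVandermonde {t : ℕ} {P : Matrix σ ι R[X]}
    (hP : ∀ i j, (P i j).degree < t) (W : Matrix ι κ R) (x : κ → R) :
    coeffMatrix t P * blockVandermonde W x t = of fun i => nodeEval W x (P i) := by
  ext i c
  rw [mul_apply, Fintype.sum_prod_type, of_apply, nodeEval_apply]
  refine Finset.sum_congr rfl fun j _ => ?_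
  rw [eval_eq_sum_degreeLTEquiv (mem_degreeLT.2 (hP i j)), Finset.mul_sum]
  exact Finset.sum_congr rfl fun z _ => mul_left_comm _ _ _

theorem isUnisolvent_of_vecMul_blockVandermonde {W : Matrix ι κ R} {x : κ → R} {v : ℕ}
    (h : ∀ w, w ᵥ* blockVandermonde W x v = 0 → w = 0) : IsUnisolvent W x v := by
  intro f hdeg hf
  have hcoeff : coeffMatrix v (of fun _ : Unit => f) () = 0 := by
    apply h
    rw [← mul_apply_eq_vecMul]
    exact (congrFun (coeffMatrix_mul_blockVandermonde (fun _ => hdeg) W x) ()).trans hf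
  funext i
  rw [Pi.zero_apply, ← degreeLTEquiv_eq_zero_iff_eq_zero (mem_degreeLT.2 (hdeg i))]
  exact funext fun z => congrFun hcoeff (i, z)

theorem coeffMatrix_shiftedRows_mul_blockVandermonde {H : Matrix σ ι R[X]} {m k t : ℕ}
    (hH : ∀ i j, (H i j).natDegree ≤ m) (hmk : m + k ≤ t) (W : Matrix ι κ R) (x : κ → R) :
    coeffMatrix t (shiftedRows H k) * blockVandermonde W x t =
      of fun p c => x c ^ (p.2 : ℕ) * nodeEval W x (H p.1) c := by
  rw [coeffMatrix_mul_blockVandermonde (degree_shiftedRows_lt hH hmk)]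
  ext p c
  exact (nodeEval_polynomial_smul W x _ _ c).trans (by rw [eval_X_pow, of_apply])

theorem coeffMatrix_shiftedRows_one_mul_blockVandermonde [DecidableEq ι] {k t : ℕ} (hkt : k ≤ t)
    (W : Matrix ι κ R) (x : κ → R) :
    coeffMatrix t (shiftedRows (1 : Matrix ι ι R[X]) k) * blockVandermonde W x t =
      blockVandermonde W x k := by
  have hdeg (i j : ι) : ((1 : Matrix ι ι R[X]) i j).natDegree ≤ 0 := by
    rw [one_apply]
    split_ifs <;> simp
  rw [coeffMatrix_shiftedRows_mul_blockVandermonde hdeg (by omega)]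
  ext p c
  rw [of_apply, nodeEval_one_row, mul_comm, blockVandermonde, of_apply]

end NodeEvaluation

section MonicAnnihilator

variable {R : Type*} [CommRing R] {κ σ : Type*} [Fintype σ] [DecidableEq σ]
  {W : Matrix σ κ R} {x : κ → R} {v : ℕ} {G : Matrix σ σ R[X]}

/-- A square polynomial matrix of the form `X ^ v • 1 + (terms of degree less than v)` all of whose
rows are killed by the evaluation at the given nodes. -/
structure IsMonicAnnihilator (W : Matrix σ κ R) (x : κ → R) (v : ℕ) (G : Matrix σ σ R[X]) :
    Prop where
  natDegree_le (m j : σ) : (G m j).natDegree ≤ v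
  map_coeff : G.map (coeff · v) = 1
  nodeEval_row (m : σ) : nodeEval W x (G m) = 0

/-- Divide a left kernel vector `w` of `G(μ)`, read as the polynomial vector `∑ w m • G m`, by
`X - μ`: the quotient has degree less than `v` and is still killed at the nodes, so it vanishes,
and so does `w`, the coefficient of `X ^ v`. -/
theorem IsMonicAnnihilator.det_map_eval_ne_zero [IsDomain R] (hG : IsMonicAnnihilator W x v G)
    (huni : IsUnisolvent W x v) {μ : R} (hμ : ∀ c, x c ≠ μ) : (G.map (eval μ)).det ≠ 0 := by
  intro hdet
  obtain ⟨w, hw, hwG⟩ := exists_vecMul_eq_zero_iff.2 hdet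
  set f : σ → R[X] := ∑ m, w m • G m with hf
  have hf_apply (j : σ) : f j = ∑ m, w m • G m j := Finset.sum_apply _ _ _
  have hf_root (j : σ) : (f j).IsRoot μ := by
    simpa [hf_apply, vecMul, dotProduct, eval_finsetSum] using congrFun hwG j
  have hf_coeff (j : σ) : (f j).coeff v = w j :=
    calc (f j).coeff v = (w ᵥ* G.map (coeff · v)) j := by simp [hf_apply, vecMul, dotProduct]
      _ = w j := by rw [hG.map_coeff, vecMul_one]
  have hf_deg (j : σ) : (f j).natDegree ≤ v := by
    rw [hf_apply]
    exact natDegree_sum_le_of_forall_le _ _ fun m _ =>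
      (natDegree_smul_le _ _).trans (hG.natDegree_le m j)
  choose h hfh using fun j => dvd_iff_isRoot.2 (hf_root j)
  have hh_deg (j : σ) : (h j).degree < v := by
    have := hf_deg j
    rcases eq_or_ne (h j) 0 with h0 | h0
    · simp [h0]
    · rw [hfh, natDegree_mul (X_sub_C_ne_zero μ) h0, natDegree_X_sub_C] at this
      exact (degree_lt_iff_coeff_zero _ _).2 fun k hk => coeff_eq_zero_of_natDegree_lt (by omega)
  have hh_eval : nodeEval W x h = 0 := by
    funext c
    have hc : nodeEval W x ((X - C μ) • h) c = 0 := by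
      rw [← show f = (X - C μ) • h from funext hfh]
      simp [hf, hG.nodeEval_row]
    rw [nodeEval_polynomial_smul, eval_sub, eval_X, eval_C] at hc
    exact (mul_eq_zero.1 hc).resolve_left (sub_ne_zero.2 (hμ c))
  have hh : h = 0 := huni h hh_deg hh_eval
  refine hw (funext fun j => ?_)
  rw [← hf_coeff, hfh, hh, Pi.zero_apply, mul_zero, coeff_zero, Pi.zero_apply]

theorem IsUnisolvent.exists_isMonicAnnihilator {F : Type*} [Field F] [Fintype κ] {W : Matrix σ κ F}
    {x : κ → F} (huni : IsUnisolvent W x v)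
    (hcard : Fintype.card κ = Fintype.card σ * v) :
    ∃ G : Matrix σ σ F[X], IsMonicAnnihilator W x v G := by
  choose f hf_deg hf_eval using fun m : σ =>
    huni.exists_nodeEval_eq hcard (nodeEval W x ((X ^ v : F[X]) • (1 : Matrix σ σ F[X]) m))
  refine ⟨of fun m => (X ^ v : F[X]) • (1 : Matrix σ σ F[X]) m - f m, fun m j => ?_, ?_,
    fun m => ?_⟩
  · refine (natDegree_sub_le_of_le ?_ (natDegree_le_of_degree_le (hf_deg m j).le)).trans
      (max_self v).le
    rw [Pi.smul_apply, one_apply]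
    split_ifs <;> simp
  · ext m j
    rw [map_apply, of_apply, Pi.sub_apply, coeff_sub, coeff_eq_zero_of_degree_lt (hf_deg m j),
      sub_zero, Pi.smul_apply, one_apply, one_apply]
    split_ifs <;> simp
  · exact (map_sub _ _ _).trans (sub_eq_zero.2 (hf_eval m).symm)

end MonicAnnihilator

section KroneckerBlocks

variable {R : Type*} [CommRing R] {Λ σ κ : Type*}

theorem nodeEval_kronecker_one [Fintype Λ] [Fintype σ] [DecidableEq σ] (D : Matrix Λ κ R)
    (y : κ → R) (f : Λ × σ → R[X]) (J : κ) (j : σ) :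
    nodeEval (D ⊗ₖ (1 : Matrix σ σ R)) (fun q => y q.1) f (J, j) =
      nodeEval D y (fun I => f (I, j)) J := by
  rw [nodeEval_apply, Fintype.sum_prod_type_right, Fintype.sum_eq_single j]
  · simp [nodeEval_apply]
  · intro i hi
    simp [hi]

variable [DecidableEq Λ]

theorem natDegree_one_kronecker_le {G : Matrix σ σ R[X]} {v : ℕ}
    (hG : ∀ i j, (G i j).natDegree ≤ v) (p q : Λ × σ) :
    (((1 : Matrix Λ Λ R[X]) ⊗ₖ G) p q).natDegree ≤ v := by
  rw [kronecker_apply, one_apply]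
  split_ifs
  · simpa using hG p.2 q.2
  · simp

/-- The block diagonal matrix whose `J`-th block is `G` evaluated at `y J`. -/
noncomputable def evalBlocks (G : Matrix σ σ R[X]) (y : Λ → R) : Matrix (Λ × σ) (Λ × σ) R :=
  reindex (Equiv.prodComm σ Λ) (Equiv.prodComm σ Λ) (blockDiagonal fun J => G.map (eval (y J)))

theorem evalBlocks_apply (G : Matrix σ σ R[X]) (y : Λ → R) (I J : Λ) (i j : σ) :
    evalBlocks G y (I, i) (J, j) = if I = J then (G i j).eval (y I) else 0 := by
  simp [evalBlocks, blockDiagonal_apply]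

variable [Fintype Λ] [Fintype σ]

theorem nodeEval_one_kronecker (W : Matrix σ κ R) (x : κ → R) (f : Λ × σ → R[X]) (J : Λ)
    (c : κ) :
    nodeEval ((1 : Matrix Λ Λ R) ⊗ₖ W) (fun q => x q.2) f (J, c) =
      nodeEval W x (fun i => f (J, i)) c := by
  rw [nodeEval_apply, Fintype.sum_prod_type, Fintype.sum_eq_single J]
  · simp [nodeEval_apply]
  · intro I hI
    simp [hI]

theorem IsUnisolvent.of_one_kronecker [Nonempty Λ] {W : Matrix σ κ R} {x : κ → R} {v : ℕ}
    (h : IsUnisolvent ((1 : Matrix Λ Λ R) ⊗ₖ W) (fun q => x q.2) v) : IsUnisolvent W x v := by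
  intro f hdeg hf
  have hrep : (fun p : Λ × σ => f p.2) = 0 := by
    refine h _ (fun p => hdeg p.2) (funext fun q => ?_)
    rw [nodeEval_one_kronecker, hf, Pi.zero_apply, Pi.zero_apply]
  obtain ⟨J⟩ := ‹Nonempty Λ›
  exact funext fun i => congrFun hrep (J, i)

theorem nodeEval_one_kronecker_row_eq_zero {W : Matrix σ κ R} {x : κ → R} {G : Matrix σ σ R[X]}
    (hG : ∀ m, nodeEval W x (G m) = 0) (p : Λ × σ) :
    nodeEval ((1 : Matrix Λ Λ R) ⊗ₖ W) (fun q => x q.2) (((1 : Matrix Λ Λ R[X]) ⊗ₖ G) p) = 0 := by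
  funext ⟨J, c⟩
  have hrow : (fun i => ((1 : Matrix Λ Λ R[X]) ⊗ₖ G) p (J, i)) =
      (1 : Matrix Λ Λ R[X]) p.1 J • G p.2 := rfl
  rw [nodeEval_one_kronecker, hrow, nodeEval_polynomial_smul, hG, Pi.zero_apply, mul_zero,
    Pi.zero_apply]

variable [DecidableEq σ]

theorem det_evalBlocks (G : Matrix σ σ R[X]) (y : Λ → R) :
    (evalBlocks G y).det = ∏ J, (G.map (eval (y J))).det := by
  rw [evalBlocks, det_reindex_self, det_blockDiagonal]

theorem nodeEval_kronecker_one_row (D : Matrix Λ Λ R) (y : Λ → R) (G : Matrix σ σ R[X])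
    (I J : Λ) (i j : σ) :
    nodeEval (D ⊗ₖ (1 : Matrix σ σ R)) (fun q => y q.1) (((1 : Matrix Λ Λ R[X]) ⊗ₖ G) (I, i))
      (J, j) = D I J * (G i j).eval (y J) := by
  rw [nodeEval_kronecker_one, nodeEval_apply, Fintype.sum_eq_single I]
  · simp
  · intro I' hI'
    simp [hI'.symm]

theorem blockVandermonde_mul_evalBlocks (D : Matrix Λ Λ R) (y : Λ → R) (G : Matrix σ σ R[X])
    (t : ℕ) :
    blockVandermonde (D ⊗ₖ (1 : Matrix σ σ R)) (fun q => y q.1) t * evalBlocks G y =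
      of fun p q => y q.1 ^ (p.2 : ℕ) * (D p.1.1 q.1 * (G p.1.2 q.2).eval (y q.1)) := by
  ext ⟨⟨I, i⟩, z⟩ ⟨J, j⟩
  rw [mul_apply, Fintype.sum_eq_single (J, i)]
  · rw [evalBlocks_apply, if_pos rfl, blockVandermonde, of_apply, of_apply, kronecker_apply,
      one_apply_eq, mul_one]
    ring
  · rintro ⟨J', i'⟩ hne
    by_cases hJ : J' = J
    · have hi : i ≠ i' := by
        rintro rfl
        exact hne (by rw [hJ])
      simp [blockVandermonde, hi]
    · simp [evalBlocks_apply, hJ]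

theorem IsMonicAnnihilator.exists_elimination {F : Type*} [Field F] {W : Matrix σ κ F} {x : κ → F}
    {v : ℕ} {G : Matrix σ σ F[X]} (hG : IsMonicAnnihilator W x v G) (huni : IsUnisolvent W x v)
    (r : ℕ) :
    ∃ M : Matrix ((Λ × σ) × Fin v ⊕ (Λ × σ) × Fin r) ((Λ × σ) × Fin (v + r)) F,
      M * blockVandermonde ((1 : Matrix Λ Λ F) ⊗ₖ W) (fun q => x q.2) (v + r) =
          fromRows (blockVandermonde ((1 : Matrix Λ Λ F) ⊗ₖ W) (fun q => x q.2) v) 0 ∧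
        ∀ (D : Matrix Λ Λ F) (y : Λ → F), (∀ c J, x c ≠ y J) →
          ∃ Q : Matrix (Λ × σ) (Λ × σ) F, IsUnit Q ∧
            M * blockVandermonde (D ⊗ₖ (1 : Matrix σ σ F)) (fun q => y q.1) (v + r) =
              fromRows (blockVandermonde (D ⊗ₖ (1 : Matrix σ σ F)) (fun q => y q.1) v)
                (blockVandermonde (D ⊗ₖ (1 : Matrix σ σ F)) (fun q => y q.1) r * Q) := by
  have hdeg := natDegree_one_kronecker_le (Λ := Λ) hG.natDegree_le
  refine ⟨fromRows (coeffMatrix (v + r) (shiftedRows 1 v))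
    (coeffMatrix (v + r) (shiftedRows ((1 : Matrix Λ Λ F[X]) ⊗ₖ G) r)), ?_, fun D y hxy =>
    ⟨evalBlocks G y, ?_, ?_⟩⟩
  · rw [fromRows_mul, coeffMatrix_shiftedRows_one_mul_blockVandermonde (v.le_add_right r),
      coeffMatrix_shiftedRows_mul_blockVandermonde hdeg le_rfl]
    simp only [nodeEval_one_kronecker_row_eq_zero hG.nodeEval_row, Pi.zero_apply, mul_zero]
    rfl
  · rw [isUnit_iff_isUnit_det, det_evalBlocks, isUnit_iff_ne_zero]
    exact Finset.prod_ne_zero_iff.2 fun J _ =>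
      hG.det_map_eval_ne_zero huni fun c => hxy c J
  · rw [fromRows_mul, coeffMatrix_shiftedRows_one_mul_blockVandermonde (v.le_add_right r),
      coeffMatrix_shiftedRows_mul_blockVandermonde hdeg le_rfl, blockVandermonde_mul_evalBlocks]
    congr 1
    ext ⟨⟨I, i⟩, z⟩ ⟨J, j⟩
    simp only [of_apply, nodeEval_kronecker_one_row]

end KroneckerBlocks

section Digits

theorem digit_zero (s i : ℕ) : digit s i 0 = i % s := by
  rw [digit, pow_zero, Nat.div_one]

theorem digit_succ (s i u : ℕ) : digit s i (u + 1) = digit s (i / s) u := by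
  rw [digit, digit, Nat.div_div_eq_div_mul, pow_succ']

theorem digit_lt {s : ℕ} (hs : 0 < s) (i u : ℕ) : digit s i u < s :=
  Nat.mod_lt _ hs

theorem eq_of_forall_digit_eq {s : ℕ} (hs : 1 < s) {i j : ℕ}
    (h : ∀ u, digit s i u = digit s j u) : i = j := by
  have hmod (k : ℕ) : i % s ^ k = j % s ^ k := by
    induction k with
    | zero => simp only [pow_zero, Nat.mod_one]
    | succ k ih => rw [Nat.mod_pow_succ, Nat.mod_pow_succ, ih, ← digit, ← digit, h]
  have hlt {m : ℕ} (hm : m ≤ i + j) : m < s ^ (i + j) := hm.trans_lt (Nat.lt_pow_self hs)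
  rw [← Nat.mod_eq_of_lt (hlt (i.le_add_right j)), hmod, Nat.mod_eq_of_lt (hlt (j.le_add_left i))]

theorem forall_ne_zero_digit_eq_iff {s : ℕ} (hs : 1 < s) {i j : ℕ} :
    (∀ u, u ≠ 0 → digit s i u = digit s j u) ↔ i / s = j / s := by
  refine ⟨fun h => eq_of_forall_digit_eq hs fun u => ?_, fun h u hu => ?_⟩
  · rw [← digit_succ, ← digit_succ, h _ u.succ_ne_zero]
  · obtain ⟨u, rfl⟩ := Nat.exists_eq_succ_of_ne_zero hu
    rw [Nat.succ_eq_add_one, digit_succ, digit_succ, h]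

theorem forall_ne_succ_digit_eq_iff {s a i j : ℕ} :
    (∀ u, u ≠ a + 1 → digit s i u = digit s j u) ↔
      i % s = j % s ∧ ∀ u, u ≠ a → digit s (i / s) u = digit s (j / s) u := by
  refine ⟨fun h => ⟨?_, fun u hu => ?_⟩, fun ⟨h0, h⟩ u hu => ?_⟩
  · simpa only [digit_zero] using h 0 a.succ_ne_zero.symm
  · rw [← digit_succ, ← digit_succ, h _ (by omega)]
  · cases u with
    | zero => rwa [digit_zero, digit_zero]
    | succ u => rw [digit_succ, digit_succ, h _ (by omega)]

theorem div_eq_and_mod_eq_iff {s i j : ℕ} : i / s = j / s ∧ i % s = j % s ↔ i = j := by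
  refine ⟨fun ⟨hdiv, hmod⟩ => ?_, fun h => by simp only [h, and_self]⟩
  rw [← Nat.div_add_mod i s, ← Nat.div_add_mod j s, hdiv, hmod]

end Digits

section KernelSign

variable (R : Type*) [CommRing R]

open scoped Classical in
/-- The coefficient `1`, `-1` or `0` with which the Vandermonde column of `j` enters the `(i, j)`
block of `A_{a,b}`. -/
noncomputable def kernelSign (s a b i j : ℕ) : R :=
  if i = j then 1
  else if digit s i a = b ∧ digit s j a ≠ b ∧ (∀ u, u ≠ a → digit s i u = digit s j u) then -1
  else 0

theorem kernelSign_zero {s : ℕ} (hs : 1 < s) (b i j : ℕ) :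
    kernelSign R s 0 b i j =
      if i / s = j / s then kernelSign R s 0 b (i % s) (j % s) else 0 := by
  unfold kernelSign
  simp only [forall_ne_zero_digit_eq_iff hs, digit_zero, Nat.mod_mod, Nat.mod_div_self,
    ← div_eq_and_mod_eq_iff (s := s) (i := i)]
  by_cases h : i / s = j / s <;> simp [h]

theorem kernelSign_succ (s a b i j : ℕ) :
    kernelSign R s (a + 1) b i j =
      if i % s = j % s then kernelSign R s a b (i / s) (j / s) else 0 := by
  classical
  have hkernel : (digit s i (a + 1) = b ∧ digit s j (a + 1) ≠ b ∧
      ∀ u, u ≠ a + 1 → digit s i u = digit s j u) ↔ digit s (i / s) a = b ∧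
      digit s (j / s) a ≠ b ∧ i % s = j % s ∧
        ∀ u, u ≠ a → digit s (i / s) u = digit s (j / s) u := by
    rw [forall_ne_succ_digit_eq_iff, digit_succ, digit_succ]
  unfold kernelSign
  by_cases h : i % s = j % s
  · have hij : i = j ↔ i / s = j / s := by rw [← div_eq_and_mod_eq_iff (s := s), and_iff_left h]
    rw [and_iff_right h] at hkernel
    rw [if_pos h]
    exact if_congr hij rfl (if_congr hkernel rfl rfl)
  · have hij : i ≠ j := fun hij => h (congrArg (· % s) hij)
    rw [if_neg h, if_neg hij, if_neg fun h' => h (hkernel.1 h').2.2.1]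

end KernelSign

section Indexing

variable {α : Type*}

/-- The row `ρ` of an `(L * s * t)`-row matrix, decoded into the pair of its block row (itself a
pair of a quotient and a remainder modulo `s`) and its inner row. -/
def rowIndex (L s t : ℕ) : Fin (L * s * t) ≃ (Fin L × Fin s) × Fin t :=
  finProdFinEquiv.symm.trans (finProdFinEquiv.symm.prodCongr (Equiv.refl _))

/-- The column `κ` of `A_{0,B}`, decoded into the quotient modulo `s` of its inner column and the
pair of the position in `B` and the remainder modulo `s` of its inner column. -/
def columnIndex (L s v : ℕ) (κ : Fin (L * s * v)) : Fin L × Fin v × Fin s :=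
  let p : Fin v × Fin (L * s) := finProdFinEquiv.symm (κ.cast (mul_comm _ _))
  (p.2.divNat, p.1, p.2.modNat)

/-- Vertical stacking of two matrices, with the rows numbered consecutively as in the paper. -/
def stackRows {ℓ v r : ℕ} {κ : Type*} (A : Matrix (Fin (ℓ * v)) κ α)
    (A' : Matrix (Fin (ℓ * r)) κ α) : Matrix (Fin (ℓ * (v + r))) κ α :=
  (fromRows A A').submatrix (fun ρ => finSumFinEquiv.symm (ρ.cast (mul_add ℓ v r))) id

theorem stackRows_apply_of_lt {ℓ v r : ℕ} {κ : Type*} (A : Matrix (Fin (ℓ * v)) κ α)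
    (A' : Matrix (Fin (ℓ * r)) κ α) {ρ : Fin (ℓ * (v + r))} (hρ : (ρ : ℕ) < ℓ * v) (j : κ) :
    stackRows A A' ρ j = A ⟨ρ, hρ⟩ j := by
  have hcast : ρ.cast (mul_add ℓ v r) = finSumFinEquiv (Sum.inl ⟨ρ, hρ⟩) := rfl
  simp only [stackRows, submatrix_apply, hcast, Equiv.symm_apply_apply, fromRows_apply_inl, id]

theorem stackRows_apply_of_le {ℓ v r : ℕ} {κ : Type*} (A : Matrix (Fin (ℓ * v)) κ α)
    (A' : Matrix (Fin (ℓ * r)) κ α) {ρ : Fin (ℓ * (v + r))} (hρ : ℓ * v ≤ (ρ : ℕ)) (j : κ) :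
    stackRows A A' ρ j =
      A' ⟨ρ - ℓ * v, Nat.sub_lt_left_of_lt_add hρ (ρ.2.trans_eq (mul_add ℓ v r))⟩ j := by
  have hcast : ρ.cast (mul_add ℓ v r) = finSumFinEquiv (Sum.inr
      ⟨ρ - ℓ * v, Nat.sub_lt_left_of_lt_add hρ (ρ.2.trans_eq (mul_add ℓ v r))⟩) :=
    Fin.ext (Nat.add_sub_of_le hρ).symm
  simp only [stackRows, submatrix_apply, hcast, Equiv.symm_apply_apply, fromRows_apply_inr, id]

/-- The row of a matrix stacked by `stackRows`, decoded by `rowIndex` in its part. -/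
def stackedRowIndex (L s v r : ℕ) (ρ : Fin (L * s * (v + r))) :
    (Fin L × Fin s) × Fin v ⊕ (Fin L × Fin s) × Fin r :=
  (finSumFinEquiv.symm (ρ.cast (mul_add _ v r))).map (rowIndex L s v) (rowIndex L s r)

theorem fromRows_submatrix_stackedRowIndex {L s v r : ℕ} {κ κ' : Type*}
    (A : Matrix ((Fin L × Fin s) × Fin v) κ α) (A' : Matrix ((Fin L × Fin s) × Fin r) κ α)
    (e : κ' → κ) :
    (fromRows A A').submatrix (stackedRowIndex L s v r) e =
      stackRows (A.submatrix (rowIndex L s v) e) (A'.submatrix (rowIndex L s r) e) := by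
  ext ρ j
  simp only [stackRows, submatrix_apply, stackedRowIndex]
  cases finSumFinEquiv.symm (ρ.cast (mul_add _ v r)) <;> rfl

theorem exists_nat_indexed_entries {m n : ℕ} [Zero α] (A : Matrix (Fin m) (Fin n) α) :
    ∃ f : ℕ → ℕ → α, ∀ (i : Fin m) (j : Fin n), f i j = A i j :=
  ⟨fun i j => if h : i < m ∧ j < n then A ⟨i, h.1⟩ ⟨j, h.2⟩ else 0, fun i j => by simp⟩

theorem lam_ne_of_lt_of_group_pos {n s a b b' j j' : ℕ} {lam : ℕ → α}
    (hdist : ∀ i < n * s, ∀ j < n * s, lam i = lam j → i = j) (ha : 0 < a) (han : a < n / s)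
    (hb : b < s) (hb' : b' < s) (hj : j < s) (hj' : j' < s) :
    lam (b' * s + j) ≠ lam (a * s * s + b * s + j') := by
  have hlt {b j : ℕ} (hb : b < s) (hj : j < s) : b * s + j < s * s := by nlinarith
  have hgroup : s * s ≤ a * s * s := Nat.mul_le_mul_right s (Nat.le_mul_of_pos_left s ha)
  have hend : a * s * s + s * s ≤ n * s := by
    rw [← add_mul, ← Nat.succ_mul]
    exact Nat.mul_le_mul_right s ((Nat.mul_le_mul_right s han).trans (Nat.div_mul_le_self n s))
  have h' := hlt hb' hj
  have h := hlt hb hj'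
  intro heq
  have := hdist _ (by omega) _ (by omega) heq
  omega

end Indexing

section Transport

variable {F : Type*} [Field F]

theorem Aent_eq_kernelSign_mul_pow (lam : ℕ → F) (s g a b i j z : ℕ) :
    Aent lam s g a b i j z =
      kernelSign F s a b i j * lam (a * s * g + b * s + digit s j a) ^ z := by
  unfold Aent kernelSign
  split_ifs <;> simp

theorem enum_mem {B : Finset ℕ} {m : ℕ} (hm : m < B.card) : enum B m ∈ B := by
  have hlen : m < (B.sort (· ≤ ·)).length := by rwa [Finset.length_sort]
  rw [enum, List.getD_eq_getElem _ _ hlen]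
  exact (Finset.mem_sort (· ≤ ·)).1 (List.getElem_mem hlen)

/-- The coefficients of `A_{a+1,b}` as a matrix indexed by quotients modulo `s`. -/
noncomputable def quotientSign (F : Type*) [Field F] (s a b L : ℕ) :
    Matrix (Fin L) (Fin L) F :=
  of fun I J => kernelSign F s a b I J

/-- The coefficients of `A_{0,B}` inside one block of `s` consecutive indices. -/
noncomputable def blockSign (F : Type*) [Field F] (s : ℕ) (B : Finset ℕ) :
    Matrix (Fin s) (Fin B.card × Fin s) F :=
  of fun i c => kernelSign F s 0 (enum B c.1) i c.2

theorem Amat_succ (lam : ℕ → F) (s g L a b t : ℕ) :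
    Amat lam s g (L * s) (a + 1) b t =
      (blockVandermonde (quotientSign F s a b L ⊗ₖ (1 : Matrix (Fin s) (Fin s) F))
        (fun q => lam ((a + 1) * s * g + b * s + digit s q.1 a)) t).submatrix (rowIndex L s t)
        finProdFinEquiv.symm := by
  ext ρ j
  simp only [Amat, Aent_eq_kernelSign_mul_pow, kernelSign_succ, digit_succ, ite_mul, zero_mul,
    of_apply, blockVandermonde, quotientSign, kroneckerMap_apply, one_apply, Fin.ext_iff, mul_ite,
    mul_one, mul_zero, submatrix_apply]
  rfl

theorem AmatB_zero {s : ℕ} (hs : 1 < s) (lam : ℕ → F) (g L t : ℕ) (B : Finset ℕ) :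
    AmatB lam s g (L * s) 0 t B =
      (blockVandermonde ((1 : Matrix (Fin L) (Fin L) F) ⊗ₖ blockSign F s B)
        (fun q => lam (enum B q.2.1 * s + q.2.2)) t).submatrix (rowIndex L s t)
        (columnIndex L s B.card) := by
  ext ρ κ
  simp [AmatB, Aent_eq_kernelSign_mul_pow, kernelSign_zero F hs _ (_ / _), digit_zero,
    blockVandermonde, rowIndex, columnIndex, blockSign, one_apply, Fin.ext_iff]

theorem isUnisolvent_blockSign {s g L : ℕ} (hs : 1 < s) (hL : 0 < L) {lam : ℕ → F} {B : Finset ℕ}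
    (hdet : (AmatB lam s g (L * s) 0 B.card B).det ≠ 0) :
    IsUnisolvent (blockSign F s B) (fun c => lam (enum B c.1 * s + c.2)) B.card := by
  have : Nonempty (Fin L) := ⟨⟨0, hL⟩⟩
  refine IsUnisolvent.of_one_kronecker (Λ := Fin L)
    (isUnisolvent_of_vecMul_blockVandermonde fun w hw => ?_)
  have hzero : (w ∘ rowIndex L s B.card) ᵥ* AmatB lam s g (L * s) 0 B.card B = 0 := by
    rw [AmatB_zero hs, submatrix_vecMul_equiv, Function.comp_assoc, Equiv.self_comp_symm,
      Function.comp_id, hw]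
    rfl
  refine (rowIndex L s B.card).surjective.injective_comp_right ?_
  exact eq_zero_of_vecMul_eq_zero hdet hzero

theorem exists_elimination_Amat {s g L : ℕ} (hs : 1 < s) (hL : 0 < L) {lam : ℕ → F}
    {B : Finset ℕ} (hdet : (AmatB lam s g (L * s) 0 B.card B).det ≠ 0) (r : ℕ) :
    ∃ M : Matrix (Fin (L * s * (B.card + r))) (Fin (L * s * (B.card + r))) F,
      M * AmatB lam s g (L * s) 0 (B.card + r) B =
          stackRows (AmatB lam s g (L * s) 0 B.card B) 0 ∧
        ∀ a b, 0 < a →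
          (∀ b' ∈ B, ∀ j < s, ∀ j' < s, lam (b' * s + j) ≠ lam (a * s * g + b * s + j')) →
          ∃ Q : Matrix (Fin (L * s)) (Fin (L * s)) F, IsUnit Q ∧
            M * Amat lam s g (L * s) a b (B.card + r) =
              stackRows (Amat lam s g (L * s) a b B.card) (Amat lam s g (L * s) a b r * Q) := by
  have huni := isUnisolvent_blockSign hs hL hdet
  obtain ⟨G, hG⟩ := huni.exists_isMonicAnnihilator (by simp [mul_comm])
  obtain ⟨M, hM₀, hM⟩ := hG.exists_elimination (Λ := Fin L) huni r
  refine ⟨M.submatrix (stackedRowIndex L s B.card r) (rowIndex L s (B.card + r)), ?_,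
    fun a b ha hsep => ?_⟩
  · rw [AmatB_zero hs, AmatB_zero hs, submatrix_mul_equiv, hM₀,
      fromRows_submatrix_stackedRowIndex]
    rfl
  · obtain ⟨a, rfl⟩ := Nat.exists_eq_add_one.2 ha
    obtain ⟨Q, hQ, hMQ⟩ := hM (quotientSign F s a b L)
      (fun J => lam ((a + 1) * s * g + b * s + digit s J a)) fun c J =>
        hsep _ (enum_mem c.1.2) _ c.2.2 _ (digit_lt (by omega) _ _)
    refine ⟨Q.submatrix finProdFinEquiv.symm finProdFinEquiv.symm,
      (isUnit_submatrix_equiv _ _).2 hQ, ?_⟩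
    simp only [Amat_succ]
    rw [submatrix_mul_equiv, submatrix_mul_equiv, hMQ, fromRows_submatrix_stackedRowIndex]

end Transport

theorem statement7_general {F : Type*} [Field F] {s g ℓ : ℕ} (hs : 1 < s) (hℓ : 0 < ℓ)
    (hsℓ : s ∣ ℓ) {lam : ℕ → F} {B : Finset ℕ}
    (hdet : (AmatB lam s g ℓ 0 B.card B).det ≠ 0) {t : ℕ} (ht : B.card ≤ t) :
    ∃ M : Matrix (Fin (ℓ * t)) (Fin (ℓ * t)) F,
      (∀ (ρ : Fin (ℓ * t)) (κ : Fin (ℓ * B.card)),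
        (M * AmatB lam s g ℓ 0 t B) ρ κ =
          if (ρ : ℕ) < ℓ * B.card then
            Aent lam s g 0 (enum B ((κ : ℕ) / ℓ)) ((ρ : ℕ) / B.card) ((κ : ℕ) % ℓ)
              ((ρ : ℕ) % B.card)
          else 0) ∧
      (∀ a b, 0 < a →
        (∀ b' ∈ B, ∀ j < s, ∀ j' < s, lam (b' * s + j) ≠ lam (a * s * g + b * s + j')) →
        ∃ Q : Matrix (Fin ℓ) (Fin ℓ) F, IsUnit Q ∧
          ∃ Abot : ℕ → ℕ → F,
            (Matrix.of (fun (p : Fin (ℓ * (t - B.card))) (j : Fin ℓ) =>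
                Abot (p : ℕ) (j : ℕ)) = Amat lam s g ℓ a b (t - B.card) * Q) ∧
            ∀ (ρ : Fin (ℓ * t)) (j : Fin ℓ),
              (M * Amat lam s g ℓ a b t) ρ j =
                if (ρ : ℕ) < ℓ * B.card then
                  Aent lam s g a b ((ρ : ℕ) / B.card) (j : ℕ) ((ρ : ℕ) % B.card)
                else Abot ((ρ : ℕ) - ℓ * B.card) (j : ℕ)) := by
  obtain ⟨L, rfl⟩ := exists_eq_mul_left_of_dvd hsℓ
  obtain ⟨r, rfl⟩ := Nat.exists_eq_add_of_le ht
  obtain ⟨M, hM₀, hM⟩ := exists_elimination_Amat hs (Nat.pos_of_mul_pos_right hℓ) hdet r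
  refine ⟨M, fun ρ κ => ?_, fun a b ha hsep => ?_⟩
  · rw [hM₀]
    split_ifs with hρ
    · exact stackRows_apply_of_lt _ _ hρ κ
    · exact stackRows_apply_of_le _ _ (not_lt.1 hρ) κ
  · obtain ⟨Q, hQ, hMQ⟩ := hM a b ha hsep
    rw [Nat.add_sub_cancel_left]
    obtain ⟨Abot, hAbot⟩ := exists_nat_indexed_entries (Amat lam s g (L * s) a b r * Q)
    refine ⟨Q, hQ, Abot, Matrix.ext hAbot, fun ρ j => ?_⟩
    rw [hMQ]
    split_ifs with hρ
    · exact stackRows_apply_of_lt _ _ hρ j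
    · exact (stackRows_apply_of_le _ _ (not_lt.1 hρ) j).trans (hAbot _ _).symm

/-- Lemma 6 of the paper: for nonempty `B ⊆ [s]` with `|B| = v < t`,
under the local constraints there is an `ℓt × ℓt` matrix `M` such that
(i) `M · A_{0,B}^{(t)}` is `A_{0,B}^{(v)}` stacked over a zero matrix, and
(ii) for all `0 < a < n/s` and `b ∈ [s]`, `M · A_{a,b}^{(t)}` is `A_{a,b}^{(v)}` stacked over
a matrix `Â = A_{a,b}^{(t−v)} · Q` with `Q` invertible (so `Â` is column equivalent to
`A_{a,b}^{(t−v)}`). -/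
theorem statement7 (F : Type*) [Field F] [Fintype F] (n k d s ℓ : ℕ)
    (hk : 1 ≤ k) (hkn : k < n) (hd₁ : k + 1 ≤ d) (hd₂ : d ≤ n - 1)
    (hs : s = d - k + 1) (hdiv : s ∣ n) (hℓ : ℓ = s ^ (n / s))
    (lam : ℕ → F)
    (hdist : ∀ i < n * s, ∀ j < n * s, lam i = lam j → i = j)
    (hloc : LocalConstraints lam s s ℓ (n / s))
    (B : Finset ℕ) (hBsub : B ⊆ Finset.range s) (hBne : B.Nonempty)
    (t : ℕ) (ht : B.card < t) :
    ∃ M : Matrix (Fin (ℓ * t)) (Fin (ℓ * t)) F,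
      (∀ (ρ : Fin (ℓ * t)) (κ : Fin (ℓ * B.card)),
        (M * AmatB lam s s ℓ 0 t B) ρ κ =
          if (ρ : ℕ) < ℓ * B.card then
            Aent lam s s 0 (enum B ((κ : ℕ) / ℓ)) ((ρ : ℕ) / B.card) ((κ : ℕ) % ℓ)
              ((ρ : ℕ) % B.card)
          else 0) ∧
      (∀ a, 0 < a → a < n / s → ∀ b < s,
        ∃ Q : Matrix (Fin ℓ) (Fin ℓ) F, IsUnit Q ∧
          ∃ Abot : ℕ → ℕ → F,
            (Matrix.of (fun (p : Fin (ℓ * (t - B.card))) (j : Fin ℓ) =>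
                Abot (p : ℕ) (j : ℕ)) = Amat lam s s ℓ a b (t - B.card) * Q) ∧
            ∀ (ρ : Fin (ℓ * t)) (j : Fin ℓ),
              (M * Amat lam s s ℓ a b t) ρ j =
                if (ρ : ℕ) < ℓ * B.card then
                  Aent lam s s a b ((ρ : ℕ) / B.card) (j : ℕ) ((ρ : ℕ) % B.card)
                else Abot ((ρ : ℕ) - ℓ * B.card) (j : ℕ)) := by
  have hdiv_pos : 0 < n / s := Nat.div_pos (Nat.le_of_dvd (by omega) hdiv) (by omega)
  obtain ⟨M, hM₀, hM⟩ := statement7_general (by omega) (hℓ ▸ pow_pos (by omega) _)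
    (hℓ ▸ dvd_pow_self s hdiv_pos.ne') (hloc 0 hdiv_pos B hBsub hBne) ht.le
  exact ⟨M, hM₀, fun a ha han b hb => hM a b ha fun b' hb' j hj j' hj' =>
    lam_ne_of_lt_of_group_pos hdist ha han hb (Finset.mem_range.1 (hBsub hb')) hj hj'⟩
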